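/- θ₂(δ) tends to 0 as δ → 0⁺; that is, for every ε > 0 there exists δ₀ > 0 such that 𝓖((1+δ)²; 2δ+δ²) ≤ ε for all δ ∈ (0, δ₀). -/

import Mathlib

/-!
Since `1/(1-h) ≥ 1` on `[0,1)`, one has `𝓕(x;κ) ≥ ∫₀^a h^{κ-1} dh = a^κ/κ` with `a = x/(1+x)`
(`rpow_div_le_Fcal`). Fix `ε > 0` and put `a₀ = ε/(1+ε)`. As `κ = 2δ+δ² → 0⁺`, `a₀^κ → 1` while
`κ → 0`, so `a₀^κ > κ` for small `δ`. Then every `x ∈ (ε,1]` satisfies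
`𝓕(x;κ) ≥ a₀^κ/κ > 1 ≥ 1/(1+δ)²`, so the set defining `𝓖((1+δ)²;κ)` lies in `[0,ε]`.
-/

open MeasureTheory

/-- `𝓕(x;κ) = ∫₀^{x/(1+x)} h^{κ-1}/(1-h) dh`. -/
noncomputable def Fcal (x κ : ℝ) : ℝ := ∫ h in (0:ℝ)..(x / (1 + x)), h ^ (κ - 1) / (1 - h)

/-- `𝓖(y;κ) = max {x ∈ [0,1] : 𝓕(x;κ) ≤ 1/y}`. -/
noncomputable def Gcal (y κ : ℝ) : ℝ := sSup {x ∈ Set.Icc (0:ℝ) 1 | Fcal x κ ≤ 1 / y}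

theorem rpow_div_le_Fcal {x κ : ℝ} (hx : 0 ≤ x) (hκ : 0 < κ) :
    (x / (1 + x)) ^ κ / κ ≤ Fcal x κ := by
  have ha0 : 0 ≤ x / (1 + x) := by positivity
  have ha1 : x / (1 + x) < 1 := by rw [div_lt_one (by linarith)]; linarith
  have hI : IntervalIntegrable (fun h : ℝ => h ^ (κ - 1)) volume 0 (x / (1 + x)) :=
    intervalIntegral.intervalIntegrable_rpow' (by linarith)
  have hJ : IntervalIntegrable (fun h : ℝ => h ^ (κ - 1) / (1 - h)) volume 0 (x / (1 + x)) := by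
    simp only [div_eq_mul_inv (_ ^ (κ - 1))]
    refine hI.mul_continuousOn (ContinuousOn.inv₀ (by fun_prop) ?_)
    intro h hh
    rw [Set.uIcc_of_le ha0] at hh
    have := hh.2
    linarith
  have hint : ∫ h in (0:ℝ)..(x / (1 + x)), h ^ (κ - 1) = (x / (1 + x)) ^ κ / κ := by
    rw [integral_rpow (Or.inl (by linarith)), sub_add_cancel, Real.zero_rpow hκ.ne', sub_zero]
  rw [← hint]
  refine intervalIntegral.integral_mono_on ha0 hI hJ fun h hh => ?_
  exact le_div_self (Real.rpow_nonneg hh.1 _) (by linarith [hh.2]) (by linarith [hh.1])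

/-- `θ₂(δ) = 𝓖((1+δ)²; 2δ+δ²)` tends to `0` as `δ → 0⁺`: for every `ε > 0` there exists
`δ₀ > 0` such that `𝓖((1+δ)²; 2δ+δ²) ≤ ε` for all `δ ∈ (0,δ₀)`. -/
theorem stmt10 :
    ∀ ε : ℝ, 0 < ε → ∃ δ₀ : ℝ, 0 < δ₀ ∧
      ∀ δ : ℝ, 0 < δ → δ < δ₀ → Gcal ((1 + δ) ^ 2) (2 * δ + δ ^ 2) ≤ ε := by
  intro ε hε
  have ha : 0 < ε / (1 + ε) := by positivity
  have hcont : Continuous fun δ : ℝ => (ε / (1 + ε)) ^ (2 * δ + δ ^ 2) :=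
    continuous_const.rpow (by fun_prop) fun _ => Or.inl ha.ne'
  have hev : ∀ᶠ δ : ℝ in nhds 0, 2 * δ + δ ^ 2 < (ε / (1 + ε)) ^ (2 * δ + δ ^ 2) :=
    ContinuousAt.eventually_lt (by fun_prop) hcont.continuousAt (by norm_num)
  obtain ⟨δ₀, hδ₀, hball⟩ := Metric.eventually_nhds_iff.1 hev
  refine ⟨δ₀, hδ₀, fun δ hδ hlt => Real.sSup_le ?_ hε.le⟩
  rintro x ⟨⟨hx0, -⟩, hF⟩
  by_contra! hx
  have hκ : 0 < 2 * δ + δ ^ 2 := by positivity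
  have hlt' := hball (y := δ) (by rwa [Real.dist_eq, sub_zero, abs_of_pos hδ])
  have hmono : ε / (1 + ε) ≤ x / (1 + x) := by
    rw [div_le_div_iff₀ (by linarith) (by linarith)]
    linarith
  have hpow := Real.rpow_le_rpow ha.le hmono hκ.le
  have hone : 1 < (x / (1 + x)) ^ (2 * δ + δ ^ 2) / (2 * δ + δ ^ 2) := by
    rw [one_lt_div hκ]
    linarith
  have hy : 1 / (1 + δ) ^ 2 ≤ 1 := by
    rw [div_le_one (by positivity)]
    linarith
  linarith [rpow_div_le_Fcal hx0 hκ]
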